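/- Lemma 3.2 (lem commutate): The actions of the Levi-type ıquantum group and of the duplex Hecke algebra on V̄^⊗m commute: every operator in Φ(L_q^ı) commutes with Ξ(h) for every h ∈ 𝓗_m. In particular it suffices that each of the generating operators ℬ_0, ℬ_i (0 ≠ i, −r ≤ i ≤ r) and 𝕜_i^{±1} (−r−1 ≤ i ≤ r+1) commutes with Ξ(T_j) for 0 ≤ j ≤ m−1 and with Ξ(x_σ^(l)) for all σ ∈ 𝔖_l and 0 ≤ l ≤ m. -/

import Mathlib

/-!
Both sides are generated by explicit operators, so it suffices that each generator of the Levi-type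
ıquantum group commutes with `Ψ(H_i)` for `i ≥ 1`, with `Ψ(H_0)`, and with `Ξ(x_σ^(l))`.

* For `i ≥ 1`, `Ψ(H_i)` is local to two neighbouring tensor positions. In the coproduct sums `𝔼` and
  `𝔽` the two summands at these positions combine to `e ⊗ κ⁻¹ + 1 ⊗ e` and `f ⊗ 1 + κ ⊗ f`, whose
  commutation with the Hecke operator is a two-site computation (`local_E`, `local_F`); all other
  summands are `d ⊗ d` there, with `d` diagonal. This is `commute_Rsw_of_mem`.
* `Ψ(H_0)` acts on the first position only. By the coideal property, `ℬ_i` is a sum of tensor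
  products whose first factor is `1`, the one-site `𝕜_i⁻¹`, or the one-site `ℬ_i`
  (`opEE_add_opFF_commute_R0op`). The first two visibly commute with `H_0`; the one-site `ℬ_i`, `i ≠ 0`,
  is symmetric under `j ↦ -j`, and the one-site `ℬ_0` is `H_0 + q` on the span of `η_{±1/2}` and the
  identity elsewhere. This is `commute_R0op_of_mem`.
* `Ξ(x_σ^(l))` is a product of operators `Ψ(H_i)`, `i ≥ 1`, after the projection of `V̄^⊗m` onto
  `V^⊗l ⊗ η_{r+3/2}^⊗(m-l)`. That projection is a tensor product of one-site block projections, and the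
  restriction `-r ≤ i ≤ r` in the Levi generators is what makes `e_i` and `f_i` respect the blocks,
  while the `κ_i` are diagonal. This is `commute_goodProj_of_mem`.
-/

noncomputable section

open scoped BigOperators

set_option maxHeartbeats 1000000
set_option synthInstance.maxHeartbeats 400000

/-- The field `ℚ(q)`. -/
abbrev Kq : Type := RatFunc ℚ

/-- The element `q`, transcendental over `ℚ`. -/
def qv : Kq := RatFunc.X

/-- Index set `𝕀(2r+4)`: the `j`-th element represents the half-integer `j - r - 3/2`. -/
abbrev Idx (r : ℕ) := Fin (2*r+4)

/-- The space `V̄`, with basis `η_j` indexed by `𝕀(2r+4)` (coordinate form). -/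
abbrev Vb (r : ℕ) := Idx r → Kq

/-- The tensor power `V̄^⊗m` (coordinates with respect to the basis `M_f`). -/
abbrev TP (r m : ℕ) := (Fin m → Idx r) → Kq

/-- Basis vector `M_f = η_{f 0} ⊗ ⋯ ⊗ η_{f (m-1)}`. -/
def Mf {r m : ℕ} (f : Fin m → Idx r) : TP r m := Pi.single f 1

/-- For a quantum-group index `a : Fin (2r+3)` (representing `i = a - r - 1 ∈ [-r-1, r+1]`),
the index of `η_{i - 1/2}`. -/
def loI {r : ℕ} (a : Fin (2*r+3)) : Idx r := ⟨a.1, by have := a.2; omega⟩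

/-- The index of `η_{i + 1/2}`. -/
def hiI {r : ℕ} (a : Fin (2*r+3)) : Idx r := ⟨a.1+1, by have := a.2; omega⟩

/-- The index of `η_{-r-3/2}`. -/
def botI (r : ℕ) : Idx r := ⟨0, by omega⟩

/-- The index of `η_{r+3/2}`. -/
def topI (r : ℕ) : Idx r := ⟨2*r+3, by omega⟩

/-- A linear endomorphism of `V̄` of the shape `v ↦ (j ↦ c j * v (t j))`. -/
def diagMove (r : ℕ) (c : Idx r → Kq) (t : Idx r → Idx r) : Module.End Kq (Vb r) where
  toFun v := fun j => c j * v (t j)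
  map_add' u v := by funext j; simp [Pi.add_apply, mul_add]
  map_smul' s v := by
    funext j
    simp only [Pi.smul_apply, smul_eq_mul, RingHom.id_apply]
    ring

/-- The operator `e_i` on `V̄`: `e_i η_{i+1/2} = η_{i-1/2}`, zero on other basis vectors. -/
def opE (r : ℕ) (a : Fin (2*r+3)) : Module.End Kq (Vb r) :=
  diagMove r (fun j => if j = loI a then 1 else 0) (fun j => if j = loI a then hiI a else j)

/-- The operator `f_i` on `V̄`: `f_i η_{i-1/2} = η_{i+1/2}`, zero on other basis vectors. -/
def opF (r : ℕ) (a : Fin (2*r+3)) : Module.End Kq (Vb r) :=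
  diagMove r (fun j => if j = hiI a then 1 else 0) (fun j => if j = hiI a then loI a else j)

/-- The operator `κ_i` on `V̄`. -/
def opK (r : ℕ) (a : Fin (2*r+3)) : Module.End Kq (Vb r) :=
  diagMove r (fun j => if j = loI a then qv else if j = hiI a then qv⁻¹ else 1) id

/-- The operator `κ_i⁻¹` on `V̄`. -/
def opKinv (r : ℕ) (a : Fin (2*r+3)) : Module.End Kq (Vb r) :=
  diagMove r (fun j => if j = loI a then qv⁻¹ else if j = hiI a then qv else 1) id

/-- A linear endomorphism of `V̄^⊗m` given by a "matrix" `c`. -/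
def matOp (r m : ℕ) (c : (Fin m → Idx r) → (Fin m → Idx r) → Kq) : Module.End Kq (TP r m) where
  toFun v := fun g => ∑ f : Fin m → Idx r, c g f * v f
  map_add' u v := by
    funext g
    simp [Pi.add_apply, mul_add, Finset.sum_add_distrib]
  map_smul' s v := by
    funext g
    simp only [Pi.smul_apply, smul_eq_mul, RingHom.id_apply, Finset.mul_sum]
    exact Finset.sum_congr rfl (fun f _ => by ring)

/-- The tensor product `A 0 ⊗ A 1 ⊗ ⋯ ⊗ A (m-1)` of endomorphisms of `V̄`,
as an endomorphism of `V̄^⊗m`. -/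
def tensorOp (r m : ℕ) (A : Fin m → Module.End Kq (Vb r)) : Module.End Kq (TP r m) :=
  matOp r m (fun g f => ∏ k : Fin m, (A k) (Pi.single (f k) 1) (g k))
/-- `𝔼_i = Σ_j id^{⊗(j-1)} ⊗ e_i ⊗ (κ_i⁻¹)^{⊗(m-j)}` on `V̄^⊗m`. -/
def opEE (r m : ℕ) (a : Fin (2*r+3)) : Module.End Kq (TP r m) :=
  ∑ j : Fin m, tensorOp r m (fun k =>
    if (k : ℕ) < (j : ℕ) then 1 else if k = j then opE r a else opKinv r a)

/-- `𝔽_i = Σ_j κ_i^{⊗(j-1)} ⊗ f_i ⊗ id^{⊗(m-j)}` on `V̄^⊗m`. -/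
def opFF (r m : ℕ) (a : Fin (2*r+3)) : Module.End Kq (TP r m) :=
  ∑ j : Fin m, tensorOp r m (fun k =>
    if (k : ℕ) < (j : ℕ) then opK r a else if k = j then opF r a else 1)

/-- `𝕂_i = κ_i^{⊗m}`. -/
def opKK (r m : ℕ) (a : Fin (2*r+3)) : Module.End Kq (TP r m) :=
  tensorOp r m (fun _ => opK r a)

/-- `𝕂_i⁻¹ = (κ_i⁻¹)^{⊗m}`. -/
def opKKinv (r m : ℕ) (a : Fin (2*r+3)) : Module.End Kq (TP r m) :=
  tensorOp r m (fun _ => opKinv r a)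

/-- `𝕜_i = 𝕂_i 𝕂_{-i}⁻¹` (the index `-i` corresponds to `Fin.rev a`). -/
def opkk (r m : ℕ) (a : Fin (2*r+3)) : Module.End Kq (TP r m) :=
  opKK r m a * opKKinv r m a.rev

/-- `𝕜_i⁻¹ = 𝕂_{-i} 𝕂_i⁻¹`. -/
def opkkInv (r m : ℕ) (a : Fin (2*r+3)) : Module.End Kq (TP r m) :=
  opKK r m a.rev * opKKinv r m a

/-- The index `a` corresponding to `i = 0`. -/
def midI (r : ℕ) : Fin (2*r+3) := ⟨r+1, by omega⟩

/-- `ℬ_i = 𝔼_i + 𝔽_{-i} 𝕂_i⁻¹` for `i ≠ 0`. -/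
def opB (r m : ℕ) (a : Fin (2*r+3)) : Module.End Kq (TP r m) :=
  opEE r m a + opFF r m a.rev * opKKinv r m a

/-- `ℬ_0 = 𝔼_0 + q 𝔽_0 𝕂_0⁻¹ + 𝕂_0⁻¹`. -/
def opB0 (r m : ℕ) : Module.End Kq (TP r m) :=
  opEE r m (midI r) + qv • (opFF r m (midI r) * opKKinv r m (midI r)) + opKKinv r m (midI r)

/-- Generating set of the Levi-type ıquantum group image `Φ(L_q^ı)`:
`ℬ_0`, the `ℬ_i` with `0 ≠ i`, `-r ≤ i ≤ r`, and the `𝕜_i^{±1}` with `-r-1 ≤ i ≤ r+1`. -/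
def LeviSet (r m : ℕ) : Set (Module.End Kq (TP r m)) :=
  {opB0 r m} ∪ (opB r m '' {a | a ≠ midI r ∧ 0 < (a : ℕ) ∧ (a : ℕ) < 2*r+2}) ∪
    Set.range (opkk r m) ∪ Set.range (opkkInv r m)

/-- `Φ(L_q^ı)`, the image of the Levi-type ıquantum group in `End(V̄^⊗m)`. -/
def PhiL (r m : ℕ) : Subalgebra Kq (Module.End Kq (TP r m)) :=
  Algebra.adjoin Kq (LeviSet r m)

/-- The operator `Ψ(H_0)` on `V̄^⊗m`. -/
def R0op (r m : ℕ) : Module.End Kq (TP r m) :=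
  if h : 0 < m then
    { toFun := fun v g =>
        v (Function.update g ⟨0, h⟩ (Fin.rev (g ⟨0, h⟩))) +
          (if g ⟨0, h⟩ < Fin.rev (g ⟨0, h⟩) then (qv⁻¹ - qv) * v g else 0)
      map_add' := fun u v => by
        funext g
        simp only [Pi.add_apply]
        split_ifs <;> ring
      map_smul' := fun s v => by
        funext g
        simp only [Pi.smul_apply, smul_eq_mul, RingHom.id_apply]
        split_ifs <;> ring }
  else 1

/-- The operator `Ψ(H_{p+1})` on `V̄^⊗m`, interchanging tensor positions `p` and `p+1`
(0-based). -/
def Rsw (r m : ℕ) (p : ℕ) : Module.End Kq (TP r m) :=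
  if h : p + 1 < m then
    { toFun := fun v g =>
        if g ⟨p, by omega⟩ = g ⟨p+1, h⟩ then qv⁻¹ * v g
        else v (g ∘ Equiv.swap ⟨p, by omega⟩ ⟨p+1, h⟩) +
          (if g ⟨p+1, h⟩ < g ⟨p, by omega⟩ then (qv⁻¹ - qv) * v g else 0)
      map_add' := fun u v => by
        funext g
        simp only [Pi.add_apply, Function.comp_apply]
        split_ifs <;> ring
      map_smul' := fun s v => by
        funext g
        simp only [Pi.smul_apply, smul_eq_mul, RingHom.id_apply, Function.comp_apply]
        split_ifs <;> ring }
  else 1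

/-- The operator `Ψ(H_i)` on `V̄^⊗m`, for `0 ≤ i ≤ m-1`. -/
def RopN (r m : ℕ) (i : ℕ) : Module.End Kq (TP r m) :=
  if i = 0 then R0op r m else Rsw r m (i - 1)
/-- `j ∈ 𝕀(2r+2)`, i.e. `η_j ∈ V`. -/
def innerI (r : ℕ) (j : Idx r) : Prop := j ≠ botI r ∧ j ≠ topI r

/-- `f` indexes a basis vector of `V^{⊗l} ⊗ η_{r+3/2}^{⊗(m-l)}`. -/
def goodF (r m : ℕ) (l : ℕ) (f : Fin m → Idx r) : Prop :=
  ∀ k : Fin m, ((k : ℕ) < l → innerI r (f k)) ∧ (l ≤ (k : ℕ) → f k = topI r)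

/-- The subspace `V̄_{{1,…,l},∅} = V^{⊗l} ⊗ η_{r+3/2}^{⊗(m-l)}` of `V̄^⊗m`. -/
def Vsub (r m : ℕ) (l : ℕ) : Submodule Kq (TP r m) :=
  Submodule.span Kq {v | ∃ f, goodF r m l f ∧ v = Mf f}

/-- The subspace `V̄_{I,J}` of `V̄^⊗m`. -/
def VIJ (r m : ℕ) (I J : Finset (Fin m)) : Submodule Kq (TP r m) :=
  Submodule.span Kq {v | ∃ f : Fin m → Idx r,
    (∀ k : Fin m, (k ∈ I → innerI r (f k)) ∧ (k ∈ J → f k = botI r) ∧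
      (k ∉ I → k ∉ J → f k = topI r)) ∧ v = Mf f}

/-- The subspace `V̄_l = ⊕_{#I = l, J} V̄_{I,J}` of `V̄^⊗m`. -/
def Vlevel (r m : ℕ) (l : ℕ) : Submodule Kq (TP r m) :=
  Submodule.span Kq {v | ∃ f : Fin m → Idx r,
    Nat.card {k : Fin m // innerI r (f k)} = l ∧ v = Mf f}

/-- The length (number of inversions) of a permutation of `{0, …, l-1}`. -/
def lenPerm {l : ℕ} (σ : Equiv.Perm (Fin l)) : ℕ :=
  (Finset.univ.filter (fun p : Fin l × Fin l => p.1 < p.2 ∧ σ p.2 < σ p.1)).card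

/-- The simple transposition interchanging `p` and `p+1` (0-based) in `𝔖_l`;
this is the paper's `s_{p+1}`. -/
def adjSwap (l : ℕ) (p : ℕ) : Equiv.Perm (Fin l) :=
  if h : p + 1 < l then Equiv.swap ⟨p, by omega⟩ ⟨p+1, h⟩ else 1

/-- The first descent of a permutation, if any. -/
def descentIdx {l : ℕ} (σ : Equiv.Perm (Fin l)) : Option ℕ :=
  (List.range l).find? (fun p =>
    if h : p + 1 < l then decide (σ ⟨p+1, h⟩ < σ ⟨p, by omega⟩) else false)

/-- Canonical reduced word construction (with fuel). -/
def permWordAux {l : ℕ} : ℕ → Equiv.Perm (Fin l) → List ℕ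
  | 0, _ => []
  | (fuel+1), σ =>
    match descentIdx σ with
    | none => []
    | some p => permWordAux fuel (σ * adjSwap l p) ++ [p]

/-- A canonical reduced word for `σ`: `σ = s_{p₁+1} ⋯ s_{p_k+1}` (paper indexing)
where `permWord σ = [p₁, …, p_k]`, and `k = ℓ(σ)`. -/
def permWord {l : ℕ} (σ : Equiv.Perm (Fin l)) : List ℕ := permWordAux (lenPerm σ) σ

/-- The operator `Ψ(H_σ)` on `V̄^⊗m` for a permutation `σ ∈ 𝔖_l` (`l ≤ m`), where
`H_σ = H_{i₁} ⋯ H_{i_k}` for a reduced expression `σ = s_{i₁} ⋯ s_{i_k}`; since `Ψ` is an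
anti-homomorphism this is the product of the `Ψ(H_i)` in reversed order. -/
def opPerm (r m : ℕ) {l : ℕ} (σ : Equiv.Perm (Fin l)) : Module.End Kq (TP r m) :=
  (((permWord σ).map (fun p => RopN r m (p+1))).reverse).prod

/-- `A` is a finite product of the operators `Ψ(H_i)^{±1}`, `0 ≤ i ≤ m-1`. -/
def IsRWord (r m : ℕ) (A : Module.End Kq (TP r m)) : Prop :=
  ∃ ws : List (Module.End Kq (TP r m)), A = ws.prod ∧
    ∀ u ∈ ws, ∃ i : ℕ, i < m ∧
      (u = RopN r m i ∨ (u * RopN r m i = 1 ∧ RopN r m i * u = 1))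
/-- Generator `H_i` of the free algebra on `m` letters. -/
def Hvar (m : ℕ) (i : Fin m) : FreeAlgebra Kq (Fin m) := FreeAlgebra.ι Kq i

/-- The defining relations of the Iwahori–Hecke algebra `H(B_m)` of type `B_m`. -/
inductive HBrel (m : ℕ) : FreeAlgebra Kq (Fin m) → FreeAlgebra Kq (Fin m) → Prop
  | quad (i : Fin m) :
      HBrel m ((Hvar m i - algebraMap Kq _ qv⁻¹) * (Hvar m i + algebraMap Kq _ qv)) 0
  | braid (i : ℕ) (h1 : 1 ≤ i) (h2 : i + 1 < m) :
      HBrel m (Hvar m ⟨i, by omega⟩ * Hvar m ⟨i+1, h2⟩ * Hvar m ⟨i, by omega⟩)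
              (Hvar m ⟨i+1, h2⟩ * Hvar m ⟨i, by omega⟩ * Hvar m ⟨i+1, h2⟩)
  | comm (i j : Fin m) (h : (i : ℕ) + 1 < (j : ℕ) ∨ (j : ℕ) + 1 < (i : ℕ)) :
      HBrel m (Hvar m i * Hvar m j) (Hvar m j * Hvar m i)
  | braid0 (h : 1 < m) :
      HBrel m (Hvar m ⟨0, by omega⟩ * Hvar m ⟨1, h⟩ * Hvar m ⟨0, by omega⟩ * Hvar m ⟨1, h⟩)
              (Hvar m ⟨1, h⟩ * Hvar m ⟨0, by omega⟩ * Hvar m ⟨1, h⟩ * Hvar m ⟨0, by omega⟩)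

/-- The Iwahori–Hecke algebra `H(B_m)` of type `B_m` over `ℚ(q)`. -/
abbrev HeckeB (m : ℕ) := RingQuot (HBrel m)

/-- The generator `H_i ∈ H(B_m)`. -/
def Hgen (m : ℕ) (i : Fin m) : HeckeB m := RingQuot.mkAlgHom Kq (HBrel m) (Hvar m i)

/-- The generator `H_j ∈ H(B_m)` with out-of-range indices sent to `1`. -/
def HgenN (m : ℕ) (j : ℕ) : HeckeB m := if h : j < m then Hgen m ⟨j, h⟩ else 1

/-- The element `H_w ∈ H(B_m)` for `w ∈ 𝔖_m ⊂ 𝒲(B_m)`, defined via a reduced expression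
for `w` (well defined by Matsumoto's theorem). -/
def HpermB (m : ℕ) (w : Equiv.Perm (Fin m)) : HeckeB m :=
  ((permWord w).map (fun p => HgenN m (p+1))).prod

/-- Generators of the duplex Hecke algebra: the `T_i` and the `x_σ^{(l)}`. -/
def DGen (m : ℕ) : Type := (Fin m) ⊕ (Σ l : Fin (m+1), Equiv.Perm (Fin (l : ℕ)))

/-- The generator `T_i` of the free algebra. -/
def Tvar (m : ℕ) (i : Fin m) : FreeAlgebra Kq (DGen m) := FreeAlgebra.ι Kq (Sum.inl i)

/-- The generator `x_σ^{(l)}` of the free algebra. -/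
def Xvar (m : ℕ) (l : Fin (m+1)) (σ : Equiv.Perm (Fin (l : ℕ))) : FreeAlgebra Kq (DGen m) :=
  FreeAlgebra.ι Kq (Sum.inr ⟨l, σ⟩)

/-- The defining relations of the duplex Hecke algebra `𝓗_m` of type `B`. -/
inductive DHrel (m : ℕ) : FreeAlgebra Kq (DGen m) → FreeAlgebra Kq (DGen m) → Prop
  | quadT (i : Fin m) :
      DHrel m ((Tvar m i + algebraMap Kq _ qv) * (Tvar m i - algebraMap Kq _ qv⁻¹)) 0
  | braidT (i : ℕ) (h1 : 1 ≤ i) (h2 : i + 1 < m) :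
      DHrel m (Tvar m ⟨i, by omega⟩ * Tvar m ⟨i+1, h2⟩ * Tvar m ⟨i, by omega⟩)
              (Tvar m ⟨i+1, h2⟩ * Tvar m ⟨i, by omega⟩ * Tvar m ⟨i+1, h2⟩)
  | commT (i j : Fin m) (h : (i : ℕ) + 1 < (j : ℕ) ∨ (j : ℕ) + 1 < (i : ℕ)) :
      DHrel m (Tvar m i * Tvar m j) (Tvar m j * Tvar m i)
  | braid0T (h : 1 < m) :
      DHrel m (Tvar m ⟨0, by omega⟩ * Tvar m ⟨1, h⟩ * Tvar m ⟨0, by omega⟩ * Tvar m ⟨1, h⟩)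
              (Tvar m ⟨1, h⟩ * Tvar m ⟨0, by omega⟩ * Tvar m ⟨1, h⟩ * Tvar m ⟨0, by omega⟩)
  | xRightUp (l : Fin (m+1)) (σ : Equiv.Perm (Fin (l : ℕ))) (p : ℕ) (hp : p + 1 < (l : ℕ))
      (hlen : lenPerm (σ * adjSwap (l : ℕ) p) = lenPerm σ + 1) :
      DHrel m (Xvar m l σ * Xvar m l (adjSwap (l : ℕ) p)) (Xvar m l (σ * adjSwap (l : ℕ) p))
  | xRightDown (l : Fin (m+1)) (σ : Equiv.Perm (Fin (l : ℕ))) (p : ℕ) (hp : p + 1 < (l : ℕ))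
      (hlen : lenPerm (σ * adjSwap (l : ℕ) p) + 1 = lenPerm σ) :
      DHrel m (Xvar m l σ * Xvar m l (adjSwap (l : ℕ) p))
              (Xvar m l (σ * adjSwap (l : ℕ) p) + algebraMap Kq _ (qv⁻¹ - qv) * Xvar m l σ)
  | xLeftUp (l : Fin (m+1)) (σ : Equiv.Perm (Fin (l : ℕ))) (p : ℕ) (hp : p + 1 < (l : ℕ))
      (hlen : lenPerm (adjSwap (l : ℕ) p * σ) = lenPerm σ + 1) :
      DHrel m (Xvar m l (adjSwap (l : ℕ) p) * Xvar m l σ) (Xvar m l (adjSwap (l : ℕ) p * σ))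
  | xLeftDown (l : Fin (m+1)) (σ : Equiv.Perm (Fin (l : ℕ))) (p : ℕ) (hp : p + 1 < (l : ℕ))
      (hlen : lenPerm (adjSwap (l : ℕ) p * σ) + 1 = lenPerm σ) :
      DHrel m (Xvar m l (adjSwap (l : ℕ) p) * Xvar m l σ)
              (Xvar m l (adjSwap (l : ℕ) p * σ) + algebraMap Kq _ (qv⁻¹ - qv) * Xvar m l σ)
  | xOrtho (l k : Fin (m+1)) (h : l ≠ k) (σ : Equiv.Perm (Fin (l : ℕ)))
      (γ : Equiv.Perm (Fin (k : ℕ))) :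
      DHrel m (Xvar m l σ * Xvar m k γ) 0
  | TxMid (i : ℕ) (l : Fin (m+1)) (h0 : 0 < i) (hil : i < (l : ℕ))
      (σ : Equiv.Perm (Fin (l : ℕ))) :
      DHrel m (Tvar m ⟨i, by have := l.2; omega⟩ * Xvar m l σ)
              (Xvar m l (adjSwap (l : ℕ) (i-1)) * Xvar m l σ)
  | xTMid (i : ℕ) (l : Fin (m+1)) (h0 : 0 < i) (hil : i < (l : ℕ))
      (σ : Equiv.Perm (Fin (l : ℕ))) :
      DHrel m (Xvar m l σ * Tvar m ⟨i, by have := l.2; omega⟩)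
              (Xvar m l σ * Xvar m l (adjSwap (l : ℕ) (i-1)))
  | TxBig (i : Fin m) (l : Fin (m+1)) (h : (l : ℕ) < (i : ℕ)) (σ : Equiv.Perm (Fin (l : ℕ))) :
      DHrel m (Tvar m i * Xvar m l σ) (algebraMap Kq _ qv⁻¹ * Xvar m l σ)
  | xTBig (i : Fin m) (l : Fin (m+1)) (h : (l : ℕ) < (i : ℕ)) (σ : Equiv.Perm (Fin (l : ℕ))) :
      DHrel m (Xvar m l σ * Tvar m i) (algebraMap Kq _ qv⁻¹ * Xvar m l σ)

/-- The duplex Hecke algebra `𝓗_m` of type `B` over `ℚ(q)`. -/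
abbrev DuplexH (m : ℕ) := RingQuot (DHrel m)

/-- The generator `T_i ∈ 𝓗_m`. -/
def Tg (m : ℕ) (i : Fin m) : DuplexH m := RingQuot.mkAlgHom Kq (DHrel m) (Tvar m i)

/-- The generator `x_σ^{(l)} ∈ 𝓗_m`. -/
def Xg (m : ℕ) (l : Fin (m+1)) (σ : Equiv.Perm (Fin (l : ℕ))) : DuplexH m :=
  RingQuot.mkAlgHom Kq (DHrel m) (Xvar m l σ)

/-! ### Tensor products of one-site operators -/

section Tensor
variable {r m : ℕ}

lemma diagMove_apply (c : Idx r → Kq) (t : Idx r → Idx r) (v : Vb r) (x : Idx r) :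
    diagMove r c t v x = c x * v (t x) := rfl

lemma diagMove_mul (c c' : Idx r → Kq) (t t' : Idx r → Idx r) :
    diagMove r c t * diagMove r c' t' = diagMove r (fun x => c x * c' (t x)) (fun x => t' (t x)) := by
  ext v x
  simp [diagMove, mul_assoc]

/-- Matrix multiplication, for the entries `A η_y (x)` of endomorphisms of `V̄`. -/
lemma end_mul_entry (A B : Module.End Kq (Vb r)) (x y : Idx r) :
    (A * B) (Pi.single y 1) x = ∑ z, A (Pi.single z 1) x * B (Pi.single y 1) z := by
  rw [Module.End.mul_apply]
  rw [LinearMap.pi_apply_eq_sum_univ A, Finset.sum_apply]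
  refine Finset.sum_congr rfl fun z _ => ?_
  have : (fun j => if z = j then (1 : Kq) else 0) = Pi.single z 1 := by
    funext j
    simp [Pi.single_apply, eq_comm]
  rw [this, Pi.smul_apply, smul_eq_mul, mul_comm]

lemma tensorOp_apply (A : Fin m → Module.End Kq (Vb r)) (v : TP r m) (g : Fin m → Idx r) :
    tensorOp r m A v g = ∑ f : Fin m → Idx r, (∏ k, A k (Pi.single (f k) 1) (g k)) * v f := rfl

lemma tensorOp_mul (A B : Fin m → Module.End Kq (Vb r)) :
    tensorOp r m A * tensorOp r m B = tensorOp r m (fun k => A k * B k) := by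
  refine LinearMap.ext fun v => funext fun g => ?_
  rw [Module.End.mul_apply, tensorOp_apply, tensorOp_apply]
  simp only [tensorOp_apply, end_mul_entry, Finset.mul_sum, ← mul_assoc,
    ← Finset.prod_mul_distrib]
  rw [Finset.sum_comm]
  refine Finset.sum_congr rfl fun f _ => ?_
  rw [← Finset.sum_mul, Finset.prod_univ_sum, Fintype.piFinset_univ]

lemma tensorOp_commute {A B : Fin m → Module.End Kq (Vb r)} (h : ∀ k, Commute (A k) (B k)) :
    Commute (tensorOp r m A) (tensorOp r m B) := by
  unfold Commute SemiconjBy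
  rw [tensorOp_mul, tensorOp_mul]
  congr 1
  exact funext fun k => (h k).eq

/-- Additivity of the tensor product in the `i`-th factor. -/
lemma tensorOp_add {A B C : Fin m → Module.End Kq (Vb r)} (i : Fin m)
    (hi : C i = A i + B i) (hA : ∀ k, k ≠ i → A k = C k) (hB : ∀ k, k ≠ i → B k = C k) :
    tensorOp r m A + tensorOp r m B = tensorOp r m C := by
  refine LinearMap.ext fun v => funext fun g => ?_
  rw [LinearMap.add_apply, Pi.add_apply]
  simp only [tensorOp_apply, ← Finset.sum_add_distrib, ← add_mul]
  refine Finset.sum_congr rfl fun f _ => ?_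
  congr 1
  rw [← Finset.mul_prod_erase _ _ (Finset.mem_univ i), ← Finset.mul_prod_erase _ _ (Finset.mem_univ i),
    ← Finset.mul_prod_erase _ _ (Finset.mem_univ i), hi, LinearMap.add_apply, Pi.add_apply, add_mul]
  congr 2
  · exact Finset.prod_congr rfl fun k hk => by rw [hA k (Finset.ne_of_mem_erase hk)]
  · exact Finset.prod_congr rfl fun k hk => by rw [hB k (Finset.ne_of_mem_erase hk)]

/-- Homogeneity of the tensor product in the `i`-th factor. -/
lemma tensorOp_smul {A C : Fin m → Module.End Kq (Vb r)} (s : Kq) (i : Fin m)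
    (hi : C i = s • A i) (hA : ∀ k, k ≠ i → A k = C k) :
    s • tensorOp r m A = tensorOp r m C := by
  refine LinearMap.ext fun v => funext fun g => ?_
  rw [LinearMap.smul_apply, Pi.smul_apply, smul_eq_mul]
  simp only [tensorOp_apply, Finset.mul_sum, ← mul_assoc]
  refine Finset.sum_congr rfl fun f _ => ?_
  congr 1
  rw [← Finset.mul_prod_erase _ _ (Finset.mem_univ i), ← Finset.mul_prod_erase _ _ (Finset.mem_univ i),
    hi, LinearMap.smul_apply, Pi.smul_apply, smul_eq_mul, mul_assoc]
  congr 2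
  exact Finset.prod_congr rfl fun k hk => by rw [hA k (Finset.ne_of_mem_erase hk)]

end Tensor

/-! ### Commutation with the operators of `H_1, …, H_{m-1}` -/

section Swap
variable {r m : ℕ}

/-- Diagonal coefficient of the Hecke operator of `H_i`, `i ≥ 1`, at a vector whose labels in the
two tensor positions concerned are `x` and `y`. -/
def swDiag (x y : Idx r) : Kq := if x = y then qv⁻¹ else if y < x then qv⁻¹ - qv else 0

/-- Coefficient of the interchanged vector in the Hecke operator of `H_i`, `i ≥ 1`. -/
def swOff (x y : Idx r) : Kq := if x = y then 0 else 1

lemma Rsw_apply {p : ℕ} (h : p + 1 < m) (v : TP r m) (g : Fin m → Idx r) :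
    Rsw r m p v g = swDiag (g ⟨p, by omega⟩) (g ⟨p+1, h⟩) * v g +
      swOff (g ⟨p, by omega⟩) (g ⟨p+1, h⟩) * v (g ∘ Equiv.swap ⟨p, by omega⟩ ⟨p+1, h⟩) := by
  rw [Rsw, dif_pos h]
  simp only [LinearMap.coe_mk, AddHom.coe_mk, swDiag, swOff]
  split_ifs <;> ring

/-- Reduction to two sites: an operator whose matrix is a two-site matrix `L` at positions `p`,
`p+1` times a factor `C` insensitive to interchanging these positions commutes with `Rsw r m p` as
soon as `L` commutes with the two-site Hecke operator. -/
lemma matOp_commute_Rsw {p : ℕ} (h : p + 1 < m)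
    (c : (Fin m → Idx r) → (Fin m → Idx r) → Kq)
    (L : Idx r → Idx r → Idx r → Idx r → Kq)
    (C : (Fin m → Idx r) → (Fin m → Idx r) → Kq)
    (hc : ∀ g f, c g f = L (g ⟨p, by omega⟩) (g ⟨p+1, h⟩) (f ⟨p, by omega⟩) (f ⟨p+1, h⟩) * C g f)
    (hC1 : ∀ g f, C (g ∘ Equiv.swap ⟨p, by omega⟩ ⟨p+1, h⟩) f = C g f)
    (hC2 : ∀ g f, C g (f ∘ Equiv.swap ⟨p, by omega⟩ ⟨p+1, h⟩) = C g f)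
    (hL : ∀ x y x' y', L x y x' y' * swDiag x' y' + L x y y' x' * swOff x' y' =
      swDiag x y * L x y x' y' + swOff x y * L y x x' y') :
    Commute (matOp r m c) (Rsw r m p) := by
  refine LinearMap.ext fun v => funext fun g => ?_
  rw [Module.End.mul_apply, Module.End.mul_apply, Rsw_apply h]
  simp only [matOp, LinearMap.coe_mk, AddHom.coe_mk, Rsw_apply h, mul_add, Finset.sum_add_distrib]
  set s : Equiv.Perm (Fin m) := Equiv.swap ⟨p, by omega⟩ ⟨p+1, h⟩ with hs
  have hsp : s ⟨p, by omega⟩ = ⟨p+1, h⟩ := Equiv.swap_apply_left _ _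
  have hsp' : s ⟨p+1, h⟩ = ⟨p, by omega⟩ := Equiv.swap_apply_right _ _
  have hss : ∀ f : Fin m → Idx r, (f ∘ s) ∘ s = f := fun f => by
    funext k; simp [hs]
  -- Reindexing the off-diagonal part by the interchange makes both sides sums against `v f`.
  let e : (Fin m → Idx r) ≃ (Fin m → Idx r) := ⟨fun f => f ∘ s, fun f => f ∘ s, hss, hss⟩
  rw [← Equiv.sum_comp e (fun f => c g f * (swOff (f ⟨p, by omega⟩) (f ⟨p+1, h⟩) * v (f ∘ s))),
    Finset.mul_sum, Finset.mul_sum, ← Finset.sum_add_distrib, ← Finset.sum_add_distrib]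
  refine Finset.sum_congr rfl fun f _ => ?_
  simp only [e, Equiv.coe_fn_mk, hss, hc, hC1, hC2, Function.comp_apply, hsp, hsp']
  have := hL (g ⟨p, by omega⟩) (g ⟨p+1, h⟩) (f ⟨p, by omega⟩) (f ⟨p+1, h⟩)
  have hsym : swOff (f ⟨p+1, h⟩) (f ⟨p, by omega⟩) = swOff (f ⟨p, by omega⟩) (f ⟨p+1, h⟩) := by
    simp only [swOff, eq_comm]
  rw [hsym]
  linear_combination (C g f * v f) * this

/-- The part of a matrix entry of a tensor product operator coming from the positions other than `p`
and `p+1`. -/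
def rest {p : ℕ} (h : p + 1 < m) (A : Fin m → Module.End Kq (Vb r)) (g f : Fin m → Idx r) : Kq :=
  ∏ k ∈ (Finset.univ.erase (⟨p, by omega⟩ : Fin m)).erase ⟨p+1, h⟩, A k (Pi.single (f k) 1) (g k)

lemma mem_rest {p : ℕ} (h : p + 1 < m) {k : Fin m}
    (hk : k ∈ (Finset.univ.erase (⟨p, by omega⟩ : Fin m)).erase ⟨p+1, h⟩) :
    (k : ℕ) ≠ p ∧ (k : ℕ) ≠ p + 1 := by
  simp only [Finset.mem_erase, Finset.mem_univ, and_true, ne_eq, Fin.ext_iff] at hk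
  exact ⟨hk.2, hk.1⟩

lemma prod_eq_rest {p : ℕ} (h : p + 1 < m) (A : Fin m → Module.End Kq (Vb r))
    (g f : Fin m → Idx r) :
    ∏ k, A k (Pi.single (f k) 1) (g k) =
      A ⟨p, by omega⟩ (Pi.single (f ⟨p, by omega⟩) 1) (g ⟨p, by omega⟩) *
        A ⟨p+1, h⟩ (Pi.single (f ⟨p+1, h⟩) 1) (g ⟨p+1, h⟩) * rest h A g f := by
  rw [← Finset.mul_prod_erase _ _ (Finset.mem_univ (⟨p, by omega⟩ : Fin m)),
    ← Finset.mul_prod_erase (Finset.univ.erase (⟨p, by omega⟩ : Fin m)) _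
      (Finset.mem_erase.2 ⟨by simp [Fin.ext_iff], Finset.mem_univ (⟨p+1, h⟩ : Fin m)⟩), mul_assoc]
  rfl

lemma swap_rest {p : ℕ} (h : p + 1 < m) {k : Fin m}
    (hk : k ∈ (Finset.univ.erase (⟨p, by omega⟩ : Fin m)).erase ⟨p+1, h⟩) :
    Equiv.swap (⟨p, by omega⟩ : Fin m) ⟨p+1, h⟩ k = k := by
  have := mem_rest h hk
  exact Equiv.swap_apply_of_ne_of_ne (fun e => this.1 (by rw [e])) (fun e => this.2 (by rw [e]))

lemma rest_swap_left {p : ℕ} (h : p + 1 < m) (A : Fin m → Module.End Kq (Vb r))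
    (g f : Fin m → Idx r) :
    rest h A (g ∘ Equiv.swap ⟨p, by omega⟩ ⟨p+1, h⟩) f = rest h A g f :=
  Finset.prod_congr rfl fun k hk => by rw [Function.comp_apply, swap_rest h hk]

lemma rest_swap_right {p : ℕ} (h : p + 1 < m) (A : Fin m → Module.End Kq (Vb r))
    (g f : Fin m → Idx r) :
    rest h A g (f ∘ Equiv.swap ⟨p, by omega⟩ ⟨p+1, h⟩) = rest h A g f :=
  Finset.prod_congr rfl fun k hk => by rw [Function.comp_apply, swap_rest h hk]

/-- A tensor product acting by the same diagonal operator at positions `p` and `p+1` commutes with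
`Rsw r m p`. -/
lemma tensorOp_commute_Rsw {p : ℕ} (h : p + 1 < m) {A : Fin m → Module.End Kq (Vb r)}
    (d : Idx r → Kq) (h1 : A ⟨p, by omega⟩ = diagMove r d id) (h2 : A ⟨p+1, h⟩ = diagMove r d id) :
    Commute (tensorOp r m A) (Rsw r m p) := by
  refine matOp_commute_Rsw h _
    (fun x y x' y' => diagMove r d id (Pi.single x' 1) x * diagMove r d id (Pi.single y' 1) y)
    (rest h A) (fun g f => by rw [prod_eq_rest h, h1, h2])
    (rest_swap_left h A) (rest_swap_right h A) ?_
  intro x y x' y'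
  simp only [diagMove_apply, id, Pi.single_apply, swDiag, swOff]
  grind

/-- Two tensor products that agree away from `p`, `p+1` add up to an operator commuting with
`Rsw r m p` if the sum of their two-site matrices commutes with the two-site Hecke operator. -/
lemma tensorOp_add_commute_Rsw {p : ℕ} (h : p + 1 < m) {A A' : Fin m → Module.End Kq (Vb r)}
    (hA : ∀ k : Fin m, (k : ℕ) ≠ p → (k : ℕ) ≠ p + 1 → A k = A' k)
    (hL : ∀ x y x' y' : Idx r,
      (A ⟨p, by omega⟩ (Pi.single x' 1) x * A ⟨p+1, h⟩ (Pi.single y' 1) y +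
        A' ⟨p, by omega⟩ (Pi.single x' 1) x * A' ⟨p+1, h⟩ (Pi.single y' 1) y) * swDiag x' y' +
      (A ⟨p, by omega⟩ (Pi.single y' 1) x * A ⟨p+1, h⟩ (Pi.single x' 1) y +
        A' ⟨p, by omega⟩ (Pi.single y' 1) x * A' ⟨p+1, h⟩ (Pi.single x' 1) y) * swOff x' y' =
      swDiag x y * (A ⟨p, by omega⟩ (Pi.single x' 1) x * A ⟨p+1, h⟩ (Pi.single y' 1) y +
        A' ⟨p, by omega⟩ (Pi.single x' 1) x * A' ⟨p+1, h⟩ (Pi.single y' 1) y) +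
      swOff x y * (A ⟨p, by omega⟩ (Pi.single x' 1) y * A ⟨p+1, h⟩ (Pi.single y' 1) x +
        A' ⟨p, by omega⟩ (Pi.single x' 1) y * A' ⟨p+1, h⟩ (Pi.single y' 1) x)) :
    Commute (tensorOp r m A + tensorOp r m A') (Rsw r m p) := by
  have hsum : tensorOp r m A + tensorOp r m A' = matOp r m (fun g f =>
      (∏ k, A k (Pi.single (f k) 1) (g k)) + ∏ k, A' k (Pi.single (f k) 1) (g k)) := by
    refine LinearMap.ext fun v => funext fun g => ?_
    rw [LinearMap.add_apply, Pi.add_apply, tensorOp_apply, tensorOp_apply, ← Finset.sum_add_distrib]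
    exact Finset.sum_congr rfl fun f _ => (add_mul _ _ _).symm
  rw [hsum]
  refine matOp_commute_Rsw h _ (fun x y x' y' =>
      A ⟨p, by omega⟩ (Pi.single x' 1) x * A ⟨p+1, h⟩ (Pi.single y' 1) y +
        A' ⟨p, by omega⟩ (Pi.single x' 1) x * A' ⟨p+1, h⟩ (Pi.single y' 1) y)
    (rest h A) (fun g f => ?_) (rest_swap_left h A) (rest_swap_right h A) hL
  have : rest h A' g f = rest h A g f := Finset.prod_congr rfl fun k hk => by
    rw [hA k (mem_rest h hk).1 (mem_rest h hk).2]
  rw [prod_eq_rest h, prod_eq_rest h, this, add_mul]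

lemma one_eq_diagMove : (1 : Module.End Kq (Vb r)) = diagMove r (fun _ => 1) id := by
  ext v x
  simp [diagMove]

lemma qv_ne_zero : qv ≠ 0 := RatFunc.X_ne_zero

/-- The two-site operator `e ⊗ κ⁻¹ + 1 ⊗ e` commutes with the two-site Hecke operator. -/
lemma local_E (a : Fin (2*r+3)) (x y x' y' : Idx r) :
    (opE r a (Pi.single x' 1) x * opKinv r a (Pi.single y' 1) y +
        (1 : Module.End Kq (Vb r)) (Pi.single x' 1) x * opE r a (Pi.single y' 1) y) * swDiag x' y' +
      (opE r a (Pi.single y' 1) x * opKinv r a (Pi.single x' 1) y +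
        (1 : Module.End Kq (Vb r)) (Pi.single y' 1) x * opE r a (Pi.single x' 1) y) * swOff x' y' =
    swDiag x y * (opE r a (Pi.single x' 1) x * opKinv r a (Pi.single y' 1) y +
        (1 : Module.End Kq (Vb r)) (Pi.single x' 1) x * opE r a (Pi.single y' 1) y) +
      swOff x y * (opE r a (Pi.single x' 1) y * opKinv r a (Pi.single y' 1) x +
        (1 : Module.End Kq (Vb r)) (Pi.single x' 1) y * opE r a (Pi.single y' 1) x) := by
  rw [one_eq_diagMove]
  have hlt : loI a < hiI a := by simp [loI, hiI]
  have hcov : ∀ z : Idx r, z < hiI a → z ≠ loI a → z < loI a := by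
    intro z; simp only [loI, hiI, Fin.lt_def, ne_eq, Fin.ext_iff]; omega
  have hcov' : ∀ z : Idx r, loI a < z → z ≠ hiI a → hiI a < z := by
    intro z; simp only [loI, hiI, Fin.lt_def, ne_eq, Fin.ext_iff]; omega
  have hq := qv_ne_zero
  simp only [opE, opKinv, diagMove_apply, id, Pi.single_apply, swDiag, swOff]
  generalize loI a = l at *
  generalize hiI a = u at *
  grind

/-- The two-site operator `f ⊗ 1 + κ ⊗ f` commutes with the two-site Hecke operator. -/
lemma local_F (a : Fin (2*r+3)) (x y x' y' : Idx r) :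
    (opF r a (Pi.single x' 1) x * (1 : Module.End Kq (Vb r)) (Pi.single y' 1) y +
        opK r a (Pi.single x' 1) x * opF r a (Pi.single y' 1) y) * swDiag x' y' +
      (opF r a (Pi.single y' 1) x * (1 : Module.End Kq (Vb r)) (Pi.single x' 1) y +
        opK r a (Pi.single y' 1) x * opF r a (Pi.single x' 1) y) * swOff x' y' =
    swDiag x y * (opF r a (Pi.single x' 1) x * (1 : Module.End Kq (Vb r)) (Pi.single y' 1) y +
        opK r a (Pi.single x' 1) x * opF r a (Pi.single y' 1) y) +
      swOff x y * (opF r a (Pi.single x' 1) y * (1 : Module.End Kq (Vb r)) (Pi.single y' 1) x +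
        opK r a (Pi.single x' 1) y * opF r a (Pi.single y' 1) x) := by
  rw [one_eq_diagMove]
  have hlt : loI a < hiI a := by simp [loI, hiI]
  have hcov : ∀ z : Idx r, z < hiI a → z ≠ loI a → z < loI a := by
    intro z; simp only [loI, hiI, Fin.lt_def, ne_eq, Fin.ext_iff]; omega
  have hcov' : ∀ z : Idx r, loI a < z → z ≠ hiI a → hiI a < z := by
    intro z; simp only [loI, hiI, Fin.lt_def, ne_eq, Fin.ext_iff]; omega
  have hq := qv_ne_zero
  simp only [opF, opK, diagMove_apply, id, Pi.single_apply, swDiag, swOff]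
  generalize loI a = l at *
  generalize hiI a = u at *
  have hne := hlt.ne
  have hn2 := hlt.not_gt
  have c1 := hcov x
  have c2 := hcov y
  have c3 := hcov' x
  have c4 := hcov' y
  clear hcov' hcov
  -- When neither label is the target of `f` both sides vanish.
  by_cases hx : x = u
  · by_cases hy : y = u
    · subst hx; subst hy; simp only [if_true]; grind
    · subst hx; simp only [if_true, if_neg hy]; grind
  · by_cases hy : y = u
    · subst hy; simp only [if_true, if_neg hx]; grind
    · simp [if_neg hx, if_neg hy]

/-- In a sum over tensor positions, only the two summands at `p` and `p+1` need to be grouped to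
commute with an operator acting on these positions. -/
lemma sum_commute {R : Type*} [Ring R] {p : ℕ} (h : p + 1 < m) (T : Fin m → R) (S : R)
    (h1 : ∀ j : Fin m, (j : ℕ) ≠ p → (j : ℕ) ≠ p + 1 → Commute (T j) S)
    (h2 : Commute (T ⟨p, by omega⟩ + T ⟨p+1, h⟩) S) : Commute (∑ j, T j) S := by
  rw [← Finset.add_sum_erase _ _ (Finset.mem_univ (⟨p, by omega⟩ : Fin m)),
    ← Finset.add_sum_erase (Finset.univ.erase (⟨p, by omega⟩ : Fin m)) _
      (Finset.mem_erase.2 ⟨by simp [Fin.ext_iff], Finset.mem_univ (⟨p+1, h⟩ : Fin m)⟩), ← add_assoc]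
  exact h2.add_left (Commute.sum_left _ _ _ fun j hj => h1 j (mem_rest h hj).1 (mem_rest h hj).2)

lemma Rsw_of_not {p : ℕ} (h : ¬ p + 1 < m) : Rsw r m p = 1 := dif_neg h

lemma opEE_commute_Rsw (a : Fin (2*r+3)) (p : ℕ) : Commute (opEE r m a) (Rsw r m p) := by
  by_cases h : p + 1 < m
  swap
  · rw [Rsw_of_not h]; exact Commute.one_right _
  refine sum_commute h _ _ (fun j hj hj' => ?_) ?_
  · rcases lt_or_ge (j : ℕ) p with hlt | hge
    · refine tensorOp_commute_Rsw h
        (fun x => if x = loI a then qv⁻¹ else if x = hiI a then qv else 1) ?_ ?_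
      · rw [if_neg (by simp; omega), if_neg (by simp [Fin.ext_iff]; omega)]; rfl
      · rw [if_neg (by simp; omega), if_neg (by simp [Fin.ext_iff]; omega)]; rfl
    · refine tensorOp_commute_Rsw h (fun _ => 1) ?_ ?_
      · rw [if_pos (by simp; omega), one_eq_diagMove]
      · rw [if_pos (by simp; omega), one_eq_diagMove]
  · refine tensorOp_add_commute_Rsw h (fun k hk hk' => ?_) ?_
    · simp only [Fin.ext_iff]
      grind
    · simpa [Fin.ext_iff] using local_E a

lemma opFF_commute_Rsw (a : Fin (2*r+3)) (p : ℕ) : Commute (opFF r m a) (Rsw r m p) := by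
  by_cases h : p + 1 < m
  swap
  · rw [Rsw_of_not h]; exact Commute.one_right _
  refine sum_commute h _ _ (fun j hj hj' => ?_) ?_
  · rcases lt_or_ge (j : ℕ) p with hlt | hge
    · refine tensorOp_commute_Rsw h (fun _ => 1) ?_ ?_
      · rw [if_neg (by simp; omega), if_neg (by simp [Fin.ext_iff]; omega), one_eq_diagMove]
      · rw [if_neg (by simp; omega), if_neg (by simp [Fin.ext_iff]; omega), one_eq_diagMove]
    · refine tensorOp_commute_Rsw h
        (fun x => if x = loI a then qv else if x = hiI a then qv⁻¹ else 1) ?_ ?_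
      · rw [if_pos (by simp; omega)]; rfl
      · rw [if_pos (by simp; omega)]; rfl
  · refine tensorOp_add_commute_Rsw h (fun k hk hk' => ?_) ?_
    · simp only [Fin.ext_iff]
      grind
    · simpa [Fin.ext_iff] using local_F a

lemma opKK_commute_Rsw (a : Fin (2*r+3)) (p : ℕ) : Commute (opKK r m a) (Rsw r m p) := by
  by_cases h : p + 1 < m
  · exact tensorOp_commute_Rsw h _ rfl rfl
  · rw [Rsw_of_not h]; exact Commute.one_right _

lemma opKKinv_commute_Rsw (a : Fin (2*r+3)) (p : ℕ) : Commute (opKKinv r m a) (Rsw r m p) := by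
  by_cases h : p + 1 < m
  · exact tensorOp_commute_Rsw h _ rfl rfl
  · rw [Rsw_of_not h]; exact Commute.one_right _

lemma add_smul_add_commute {R : Type*} [Ring R] [Algebra Kq R] {X Y Z S : R} (c : Kq)
    (hX : Commute X S) (hY : Commute Y S) (hZ : Commute Z S) : Commute (X + c • Y + Z) S :=
  (hX.add_left (hY.smul_left c)).add_left hZ

/-- The generators of the Levi-type ıquantum group are polynomials in the operators `𝔼_a`, `𝔽_a`
with `0 < a < 2r+2` (that is, `-r ≤ i ≤ r`), `𝕂_a` and `𝕂_a⁻¹`, so commutation may be tested on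
these. -/
lemma commute_of_mem_LeviSet {B S : Module.End Kq (TP r m)} (hB : B ∈ LeviSet r m)
    (hE : ∀ a : Fin (2*r+3), 0 < (a : ℕ) → (a : ℕ) < 2*r+2 → Commute (opEE r m a) S)
    (hF : ∀ a : Fin (2*r+3), 0 < (a : ℕ) → (a : ℕ) < 2*r+2 → Commute (opFF r m a) S)
    (hK : ∀ a, Commute (opKK r m a) S) (hK' : ∀ a, Commute (opKKinv r m a) S) :
    Commute B S := by
  rcases hB with ((hB | ⟨a, ⟨-, h0, h1⟩, rfl⟩) | ⟨a, rfl⟩) | ⟨a, rfl⟩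
  · rw [Set.mem_singleton_iff.1 hB, opB0]
    have h0 : 0 < ((midI r : Fin (2*r+3)) : ℕ) := Nat.succ_pos r
    have h1 : ((midI r : Fin (2*r+3)) : ℕ) < 2*r+2 := by simp only [midI]; omega
    exact add_smul_add_commute qv (hE _ h0 h1) ((hF _ h0 h1).mul_left (hK' _)) (hK' _)
  · rw [opB]
    have hFr : Commute (opFF r m a.rev) S :=
      hF _ (by rw [Fin.val_rev]; omega) (by rw [Fin.val_rev]; omega)
    exact (hE a h0 h1).add_left (hFr.mul_left (hK' a))
  · rw [opkk]
    exact (hK a).mul_left (hK' a.rev)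
  · rw [opkkInv]
    exact (hK a.rev).mul_left (hK' a)

lemma commute_Rsw_of_mem {B : Module.End Kq (TP r m)} (hB : B ∈ LeviSet r m) (p : ℕ) :
    Commute B (Rsw r m p) :=
  commute_of_mem_LeviSet hB (fun a _ _ => opEE_commute_Rsw a p) (fun a _ _ => opFF_commute_Rsw a p)
    (fun a => opKK_commute_Rsw a p) (fun a => opKKinv_commute_Rsw a p)

end Swap

/-! ### Commutation with the operator of `H_0` -/

section Flip
variable {r m : ℕ}

/-- The action of `H_0` on a single copy of `V̄`; `Fin.rev` is `j ↦ -j` on half-integers. -/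
def flipOp (r : ℕ) : Module.End Kq (Vb r) :=
  diagMove r (fun _ => 1) Fin.rev +
    diagMove r (fun x => if x < Fin.rev x then qv⁻¹ - qv else 0) id

lemma flipOp_apply (v : Vb r) (x : Idx r) :
    flipOp r v x = v (Fin.rev x) + (if x < Fin.rev x then qv⁻¹ - qv else 0) * v x := by
  simp [flipOp, diagMove_apply]

lemma tensorOp_diagMove (c : Fin m → Idx r → Kq) (t : Fin m → Idx r → Idx r) (v : TP r m)
    (g : Fin m → Idx r) :
    tensorOp r m (fun k => diagMove r (c k) (t k)) v g =
      (∏ k, c k (g k)) * v (fun k => t k (g k)) := by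
  rw [tensorOp_apply, Finset.sum_eq_single (fun k => t k (g k))]
  · simp [diagMove_apply]
  · intro f _ hf
    obtain ⟨k, hk⟩ := Function.ne_iff.1 hf
    rw [Finset.prod_eq_zero (Finset.mem_univ k), zero_mul]
    rw [diagMove_apply, Pi.single_eq_of_ne (Ne.symm hk), mul_zero]
  · simp

/-- `Ψ(H_0)` acts by `flipOp` on the first tensor factor. -/
lemma R0op_eq (h : 0 < m) :
    R0op r m = tensorOp r m (fun k => if k = ⟨0, h⟩ then flipOp r else 1) := by
  rw [← tensorOp_add (i := ⟨0, h⟩)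
    (A := fun k => diagMove r (fun _ => 1) (if k = ⟨0, h⟩ then Fin.rev else id))
    (B := fun k => diagMove r (fun x => if k = ⟨0, h⟩ then
      (if x < Fin.rev x then qv⁻¹ - qv else 0) else 1) id)]
  · refine LinearMap.ext fun v => funext fun g => ?_
    rw [LinearMap.add_apply, Pi.add_apply, tensorOp_diagMove, tensorOp_diagMove, R0op, dif_pos h]
    have hup : (fun k => (if k = ⟨0, h⟩ then Fin.rev else id : Idx r → Idx r) (g k)) =
        Function.update g ⟨0, h⟩ (Fin.rev (g ⟨0, h⟩)) := by
      funext k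
      by_cases hk : k = ⟨0, h⟩
      · subst hk; simp
      · simp [hk]
    rw [hup]
    simp
  · simp [flipOp]
  · intro k hk
    simp [hk, one_eq_diagMove]
  · intro k hk
    simp [hk, one_eq_diagMove]

lemma tensorOp_commute_R0op (h : 0 < m) {A : Fin m → Module.End Kq (Vb r)}
    (hA : Commute (A ⟨0, h⟩) (flipOp r)) : Commute (tensorOp r m A) (R0op r m) := by
  rw [R0op_eq h]
  refine tensorOp_commute fun k => ?_
  split_ifs with hk
  · rw [hk]; exact hA
  · exact Commute.one_right _

lemma diagMove_commute_flipOp {d : Idx r → Kq} (hd : ∀ x, d (Fin.rev x) = d x) :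
    Commute (diagMove r d id) (flipOp r) := by
  refine LinearMap.ext fun v => funext fun x => ?_
  rw [Module.End.mul_apply, Module.End.mul_apply]
  simp only [diagMove_apply, flipOp_apply, id, hd]
  ring

lemma rev_eq_loI (a : Fin (2*r+3)) (x : Idx r) : Fin.rev x = loI a ↔ x = hiI a.rev := by
  simp only [loI, hiI, Fin.ext_iff, Fin.val_rev]; omega

lemma rev_eq_hiI (a : Fin (2*r+3)) (x : Idx r) : Fin.rev x = hiI a ↔ x = loI a.rev := by
  simp only [loI, hiI, Fin.ext_iff, Fin.val_rev]; omega

/-- The one-site operator of `𝕜_i` commutes with `H_0`: its eigenvalues are symmetric under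
`j ↦ -j`. -/
lemma opK_mul_opKinv_rev_commute_flipOp (a : Fin (2*r+3)) :
    Commute (opK r a * opKinv r a.rev) (flipOp r) := by
  rw [opK, opKinv, diagMove_mul]
  refine diagMove_commute_flipOp fun x => ?_
  have hne : ∀ b : Fin (2*r+3), loI b ≠ hiI b := fun b => by simp [loI, hiI, Fin.ext_iff]
  have h1 := hne a
  have h2 := hne a.rev
  have hq := qv_ne_zero
  simp only [id, rev_eq_loI, rev_eq_hiI, Fin.rev_rev]
  generalize loI a = l at *
  generalize hiI a = u at *
  generalize loI a.rev = l' at *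
  generalize hiI a.rev = u' at *
  grind

/-- The one-site operator of `ℬ_i`, `i ≠ 0`, commutes with `H_0`: it sends `η_{i+1/2}` to
`η_{i-1/2}` and `η_{-i-1/2}` to `η_{-i+1/2}`. -/
lemma opB_local_commute_flipOp {a : Fin (2*r+3)} (ha : a ≠ midI r) :
    Commute (opE r a + opF r a.rev * opKinv r a) (flipOp r) := by
  refine LinearMap.ext fun v => funext fun x => ?_
  have e1 : Fin.rev (loI a) = hiI a.rev := (rev_eq_hiI _ _).2 (by rw [Fin.rev_rev])
  have e2 : Fin.rev (hiI a) = loI a.rev := (rev_eq_loI _ _).2 (by rw [Fin.rev_rev])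
  have e3 : Fin.rev (loI a.rev) = hiI a := (rev_eq_hiI _ _).2 rfl
  have e4 : Fin.rev (hiI a.rev) = loI a := (rev_eq_loI _ _).2 rfl
  have ha' : (a : ℕ) ≠ r + 1 := fun h => ha (Fin.ext h)
  have h1 : loI a.rev ≠ loI a := by simp only [loI, ne_eq, Fin.ext_iff, Fin.val_rev]; omega
  have h2 : loI a.rev ≠ hiI a := by simp only [loI, hiI, ne_eq, Fin.ext_iff, Fin.val_rev]; omega
  have h3 : hiI a.rev ≠ loI a := by simp only [loI, hiI, ne_eq, Fin.ext_iff, Fin.val_rev]; omega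
  have h4 : hiI a < loI a.rev ↔ loI a < hiI a.rev := by
    simp only [loI, hiI, Fin.lt_def, Fin.val_rev]; omega
  have h5 : hiI a.rev < loI a ↔ loI a.rev < hiI a := by
    simp only [loI, hiI, Fin.lt_def, Fin.val_rev]; omega
  rw [Module.End.mul_apply, Module.End.mul_apply, opE, opF, opKinv, diagMove_mul]
  simp only [LinearMap.add_apply, Pi.add_apply, diagMove_apply, flipOp_apply, id, rev_eq_loI,
    rev_eq_hiI, Fin.rev_rev]
  by_cases hx : x = loI a
  · subst hx; grind
  by_cases hx' : x = hiI a.rev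
  · subst hx'; grind
  simp [hx, hx']

/-- The one-site operator of `ℬ_0` commutes with `H_0`: on the span of `η_{±1/2}` it equals
`H_0 + q`, and it is the identity on the other `η_j`. -/
lemma opB0_local_commute_flipOp :
    Commute (opE r (midI r) + qv • (opF r (midI r) * opKinv r (midI r)) + opKinv r (midI r))
      (flipOp r) := by
  refine LinearMap.ext fun v => funext fun x => ?_
  have e0 : (midI r).rev = midI r := by simp only [midI, Fin.ext_iff, Fin.val_rev]; omega
  have e1 : Fin.rev (loI (midI r)) = hiI (midI r) := (rev_eq_hiI _ _).2 (by rw [e0])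
  have e2 : Fin.rev (hiI (midI r)) = loI (midI r) := (rev_eq_loI _ _).2 (by rw [e0])
  have h1 : loI (midI r) < hiI (midI r) := by simp [loI, hiI]
  have h2 : ¬ hiI (midI r) < loI (midI r) := by simp [loI, hiI, Fin.lt_def]
  have hq := qv_ne_zero
  rw [Module.End.mul_apply, Module.End.mul_apply, opE, opF, opKinv, diagMove_mul]
  simp only [LinearMap.add_apply, LinearMap.smul_apply, Pi.smul_apply, smul_eq_mul, Pi.add_apply,
    diagMove_apply, flipOp_apply, id, rev_eq_loI, rev_eq_hiI, e0]
  by_cases hx : x = loI (midI r)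
  · subst hx; grind
  by_cases hx' : x = hiI (midI r)
  · subst hx'; grind
  simp [hx, hx']

/-- The coideal property in the form needed: in `𝔼_a + s 𝔽_b 𝕂_a⁻¹ + X ⊗ κ_a⁻¹ ⊗ ⋯ ⊗ κ_a⁻¹`, the
terms whose raising or lowering operator sits at the first position combine into a single tensor
product with first factor `e_a + s f_b κ_a⁻¹ + X`, and all others have first factor `1` or
`κ_b κ_a⁻¹`. -/
lemma opEE_add_opFF_commute_R0op (h : 0 < m) (a b : Fin (2*r+3)) (s : Kq)
    (hK : Commute (opK r b * opKinv r a) (flipOp r)) (Z : Module.End Kq (TP r m))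
    (X : Module.End Kq (Vb r))
    (hZ : Z = tensorOp r m (fun k => if k = ⟨0, h⟩ then X else opKinv r a))
    (hX : Commute (opE r a + s • (opF r b * opKinv r a) + X) (flipOp r)) :
    Commute (opEE r m a + s • (opFF r m b * opKKinv r m a) + Z) (R0op r m) := by
  rw [opEE, opFF, opKKinv, Finset.sum_mul, Finset.smul_sum]
  simp only [tensorOp_mul]
  rw [← Finset.add_sum_erase _ _ (Finset.mem_univ (⟨0, h⟩ : Fin m)),
    ← Finset.add_sum_erase _ (fun j : Fin m => s • _) (Finset.mem_univ (⟨0, h⟩ : Fin m))]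
  rw [add_add_add_comm, add_right_comm, hZ,
    tensorOp_smul (C := fun k => if k = ⟨0, h⟩ then s • (opF r b * opKinv r a) else opKinv r a)
      s ⟨0, h⟩ (by simp) (by intro k hk; simp [hk]),
    tensorOp_add (C := fun k => if k = ⟨0, h⟩ then opE r a + s • (opF r b * opKinv r a)
      else opKinv r a) ⟨0, h⟩ (by simp) (by intro k hk; simp [hk]) (by intro k hk; simp [hk]),
    tensorOp_add (C := fun k => if k = ⟨0, h⟩ then opE r a + s • (opF r b * opKinv r a) + X
      else opKinv r a) ⟨0, h⟩ (by simp) (by intro k hk; simp [hk]) (by intro k hk; simp [hk])]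
  refine (tensorOp_commute_R0op h ?_).add_left ((Commute.sum_left _ _ _ fun j hj => ?_).add_left
    (Commute.sum_left _ _ _ fun j hj => Commute.smul_left ?_ _))
  · simpa using hX
  · have : 0 < (j : ℕ) := Nat.pos_of_ne_zero fun e => Finset.ne_of_mem_erase hj (Fin.ext e)
    refine tensorOp_commute_R0op h ?_
    rw [if_pos this]
    exact Commute.one_left _
  · have : 0 < (j : ℕ) := Nat.pos_of_ne_zero fun e => Finset.ne_of_mem_erase hj (Fin.ext e)
    refine tensorOp_commute_R0op h ?_
    rw [if_pos this]
    exact hK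

lemma commute_R0op_of_mem (h : 0 < m) {B : Module.End Kq (TP r m)} (hB : B ∈ LeviSet r m) :
    Commute B (R0op r m) := by
  rcases hB with ((hB | ⟨a, ha, rfl⟩) | ⟨a, rfl⟩) | ⟨a, rfl⟩
  · rw [Set.mem_singleton_iff.1 hB]
    have e0 : (midI r).rev = midI r := by simp only [midI, Fin.ext_iff, Fin.val_rev]; omega
    have hK := opK_mul_opKinv_rev_commute_flipOp (midI r)
    rw [e0] at hK
    exact opEE_add_opFF_commute_R0op h _ _ qv hK _ (opKinv r (midI r)) (by simp [opKKinv])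
      opB0_local_commute_flipOp
  · have hK := opK_mul_opKinv_rev_commute_flipOp a.rev
    rw [Fin.rev_rev] at hK
    -- For `i ≠ 0` there is no summand `𝕂_i⁻¹`: take `X = 0`.
    have hzero : (0 : Module.End Kq (TP r m)) =
        tensorOp r m (fun k => if k = ⟨0, h⟩ then 0 else opKinv r a) := by
      rw [← tensorOp_smul (A := fun _ => opKinv r a) 0 ⟨0, h⟩ (by simp) (by intro k hk; simp [hk]),
        zero_smul]
    have := opEE_add_opFF_commute_R0op h a a.rev 1 hK 0 0 hzero
      (by simpa using opB_local_commute_flipOp ha.1)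
    simpa [opB] using this
  · rw [opkk, opKK, opKKinv, tensorOp_mul]
    exact tensorOp_commute_R0op h (opK_mul_opKinv_rev_commute_flipOp a)
  · rw [opkkInv, opKK, opKKinv, tensorOp_mul]
    have hK := opK_mul_opKinv_rev_commute_flipOp a.rev
    rw [Fin.rev_rev] at hK
    exact tensorOp_commute_R0op h hK

end Flip

/-! ### Block projections and the operators of the `x_σ^(l)` -/

section Proj
variable {r m : ℕ}

/-- The projection of `V̄` onto `V` along the span of the two extreme basis vectors. -/
def innerProj (r : ℕ) : Module.End Kq (Vb r) :=
  diagMove r (fun x => if x ≠ botI r ∧ x ≠ topI r then 1 else 0) id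

/-- The projection of `V̄` onto the line of `η_{r+3/2}` (along the other basis vectors). -/
def topProj (r : ℕ) : Module.End Kq (Vb r) :=
  diagMove r (fun x => if x = topI r then 1 else 0) id

/-- The projection of `V̄^⊗m` onto `V^⊗l ⊗ η_{r+3/2}^⊗(m-l)` along the other basis vectors. -/
def goodProj (r m l : ℕ) : Module.End Kq (TP r m) :=
  tensorOp r m (fun k => if (k : ℕ) < l then innerProj r else topProj r)

lemma goodProj_apply (l : ℕ) (v : TP r m) (g : Fin m → Idx r) :
    (goodF r m l g → goodProj r m l v g = v g) ∧ (¬ goodF r m l g → goodProj r m l v g = 0) := by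
  have : goodProj r m l v g = (∏ k : Fin m, if (k : ℕ) < l then
      (if g k ≠ botI r ∧ g k ≠ topI r then (1 : Kq) else 0)
      else if g k = topI r then 1 else 0) * v g := by
    refine Eq.trans ?_ (tensorOp_diagMove (fun (k : Fin m) (x : Idx r) => if (k : ℕ) < l then
      (if x ≠ botI r ∧ x ≠ topI r then (1 : Kq) else 0)
      else if x = topI r then 1 else 0) (fun _ => id) v g)
    refine congrArg (fun A => tensorOp r m A v g) (funext fun k => ?_)
    split_ifs <;> rfl
  rw [this]
  constructor
  · intro hg
    rw [Finset.prod_eq_one, one_mul]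
    intro k _
    split_ifs with h1 h2 h3
    · rfl
    · exact absurd ((hg k).1 h1) h2
    · rfl
    · exact absurd ((hg k).2 (not_lt.1 h1)) h3
  · intro hg
    obtain ⟨k, hk⟩ := not_forall.1 hg
    rw [Finset.prod_eq_zero (Finset.mem_univ k), zero_mul]
    split_ifs with h1 h2 h3
    · exact absurd ⟨fun _ => h2, fun h => absurd h1 (not_lt.2 h)⟩ hk
    · rfl
    · exact absurd ⟨fun h => absurd h h1, fun _ => h3⟩ hk
    · rfl

/-- A weighted relabelling that never crosses between `V`, `η_{-r-3/2}` and `η_{r+3/2}` commutes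
with the block projections. -/
lemma diagMove_commute_proj {c : Idx r → Kq} {t : Idx r → Idx r}
    (h : ∀ x, c x ≠ 0 → ((t x = botI r ↔ x = botI r) ∧ (t x = topI r ↔ x = topI r))) :
    Commute (diagMove r c t) (innerProj r) ∧ Commute (diagMove r c t) (topProj r) := by
  constructor <;>
  · refine LinearMap.ext fun v => funext fun x => ?_
    rw [Module.End.mul_apply, Module.End.mul_apply]
    simp only [innerProj, topProj, diagMove_apply, id]
    by_cases hc : c x = 0
    · simp [hc]
    · simp only [(h x hc).1, (h x hc).2, ne_eq]
      ring

/-- `A` is compatible with the decomposition of `V̄` into `V` and the two extreme lines. -/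
def PreservesBlocks (A : Module.End Kq (Vb r)) : Prop :=
  Commute A (innerProj r) ∧ Commute A (topProj r)

lemma tensorOp_commute_goodProj (l : ℕ) {A : Fin m → Module.End Kq (Vb r)}
    (hA : ∀ k, PreservesBlocks (A k)) : Commute (tensorOp r m A) (goodProj r m l) := by
  refine tensorOp_commute fun k => ?_
  split_ifs
  · exact (hA k).1
  · exact (hA k).2

lemma opE_preserves {a : Fin (2*r+3)} (h0 : 0 < (a : ℕ)) (h1 : (a : ℕ) < 2*r+2) :
    PreservesBlocks (opE r a) := by
  refine diagMove_commute_proj fun x hx => ?_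
  have hx' : x = loI a := by by_contra h; exact hx (if_neg h)
  subst hx'
  simp only [if_true, loI, hiI, botI, topI, Fin.ext_iff]
  omega

lemma opF_preserves {a : Fin (2*r+3)} (h0 : 0 < (a : ℕ)) (h1 : (a : ℕ) < 2*r+2) :
    PreservesBlocks (opF r a) := by
  refine diagMove_commute_proj fun x hx => ?_
  have hx' : x = hiI a := by by_contra h; exact hx (if_neg h)
  subst hx'
  simp only [if_true, loI, hiI, botI, topI, Fin.ext_iff]
  omega

lemma opK_preserves (a : Fin (2*r+3)) : PreservesBlocks (opK r a) :=
  diagMove_commute_proj fun _ _ => ⟨Iff.rfl, Iff.rfl⟩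

lemma opKinv_preserves (a : Fin (2*r+3)) : PreservesBlocks (opKinv r a) :=
  diagMove_commute_proj fun _ _ => ⟨Iff.rfl, Iff.rfl⟩

lemma one_preserves : PreservesBlocks (1 : Module.End Kq (Vb r)) :=
  ⟨Commute.one_left _, Commute.one_left _⟩

lemma opEE_commute_goodProj (l : ℕ) {a : Fin (2*r+3)} (h0 : 0 < (a : ℕ))
    (h1 : (a : ℕ) < 2*r+2) : Commute (opEE r m a) (goodProj r m l) := by
  refine Commute.sum_left _ _ _ fun j _ => tensorOp_commute_goodProj l fun k => ?_
  split_ifs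
  exacts [one_preserves, opE_preserves h0 h1, opKinv_preserves a]

lemma opFF_commute_goodProj (l : ℕ) {a : Fin (2*r+3)} (h0 : 0 < (a : ℕ))
    (h1 : (a : ℕ) < 2*r+2) : Commute (opFF r m a) (goodProj r m l) := by
  refine Commute.sum_left _ _ _ fun j _ => tensorOp_commute_goodProj l fun k => ?_
  split_ifs
  exacts [opK_preserves a, opF_preserves h0 h1, one_preserves]

lemma opKK_commute_goodProj (l : ℕ) (a : Fin (2*r+3)) :
    Commute (opKK r m a) (goodProj r m l) :=
  tensorOp_commute_goodProj l fun _ => opK_preserves a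

lemma opKKinv_commute_goodProj (l : ℕ) (a : Fin (2*r+3)) :
    Commute (opKKinv r m a) (goodProj r m l) :=
  tensorOp_commute_goodProj l fun _ => opKinv_preserves a

lemma commute_goodProj_of_mem (l : ℕ) {B : Module.End Kq (TP r m)} (hB : B ∈ LeviSet r m) :
    Commute B (goodProj r m l) :=
  commute_of_mem_LeviSet hB (fun _ => opEE_commute_goodProj l) (fun _ => opFF_commute_goodProj l)
    (opKK_commute_goodProj l) (opKKinv_commute_goodProj l)

lemma goodProj_Mf (l : ℕ) (f : Fin m → Idx r) :
    (goodF r m l f → goodProj r m l (Mf f) = Mf f) ∧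
      (¬ goodF r m l f → goodProj r m l (Mf f) = 0) := by
  constructor <;> intro hf <;> funext g <;> by_cases hg : goodF r m l g
  · exact (goodProj_apply l _ g).1 hg
  · rw [(goodProj_apply l _ g).2 hg, Mf, Pi.single_eq_of_ne]
    rintro rfl
    exact hg hf
  · rw [(goodProj_apply l _ g).1 hg, Mf, Pi.single_eq_of_ne, Pi.zero_apply]
    rintro rfl
    exact hf hg
  · exact (goodProj_apply l _ g).2 hg

/-- Only the fact that `opPerm` is a product of the `Ψ(H_i)` with `i ≥ 1` matters, not the choice of
word. -/
lemma commute_opPerm_of_mem {B : Module.End Kq (TP r m)} (hB : B ∈ LeviSet r m) {l : ℕ}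
    (σ : Equiv.Perm (Fin l)) : Commute B (opPerm r m σ) := by
  refine Commute.list_prod_right _ _ fun X hX => ?_
  obtain ⟨p, -, rfl⟩ := List.mem_map.1 (List.mem_reverse.1 hX)
  rw [RopN, if_neg (Nat.succ_ne_zero p)]
  exact commute_Rsw_of_mem hB _

end Proj

/-- **Lemma 3.2.** The actions of the Levi-type ıquantum group and of the duplex Hecke
algebra on `V̄^⊗m` commute: every operator in `Φ(L_q^ı)` commutes with `Ξ(h)` for every
`h ∈ 𝓗_m`. -/
theorem levi_commutes_with_duplex (r m : ℕ) (hr : 1 ≤ r) (hm : 2 ≤ m)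
    (Xi : DuplexH m →ₐ[Kq] (Module.End Kq (TP r m))ᵐᵒᵖ)
    (hXiT : ∀ i : Fin m, (Xi (Tg m i)).unop = RopN r m (i : ℕ))
    (hXix : ∀ (l : Fin (m+1)) (σ : Equiv.Perm (Fin (l : ℕ))),
      ∀ v ∈ Vsub r m (l : ℕ), (Xi (Xg m l σ)).unop v = opPerm r m σ v)
    (hXix0 : ∀ (l : Fin (m+1)) (σ : Equiv.Perm (Fin (l : ℕ))) (f : Fin m → Idx r),
      ¬ goodF r m (l : ℕ) f → (Xi (Xg m l σ)).unop (Mf f) = 0) :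
    ∀ B ∈ PhiL r m, ∀ h : DuplexH m, B * (Xi h).unop = (Xi h).unop * B := by
  have hgen : ∀ B ∈ LeviSet r m, ∀ h : DuplexH m, Commute B (Xi h).unop := by
    intro B hB h
    obtain ⟨w, rfl⟩ := RingQuot.mkAlgHom_surjective Kq (DHrel m) h
    induction w using FreeAlgebra.induction with
    | grade0 s =>
      rw [AlgHom.commutes, AlgHom.commutes]
      exact Algebra.commute_algebraMap_right s B
    | grade1 x =>
      rcases x with i | ⟨l, σ⟩
      · have e : (Xi (RingQuot.mkAlgHom Kq (DHrel m) (FreeAlgebra.ι Kq (Sum.inl i)))).unop =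
          RopN r m (i : ℕ) := hXiT i
        rw [e, RopN]
        split_ifs
        · exact commute_R0op_of_mem (by omega) hB
        · exact commute_Rsw_of_mem hB _
      · have e : (Xi (RingQuot.mkAlgHom Kq (DHrel m)
            (FreeAlgebra.ι Kq (Sum.inr ⟨l, σ⟩)))).unop =
            opPerm r m σ * goodProj r m (l : ℕ) := by
          -- Both sides agree on the basis: `Ξ(x_σ^(l))` is `opPerm` after a projection.
          change (Xi (Xg m l σ)).unop = _
          refine (Pi.basisFun Kq (Fin m → Idx r)).ext fun f => ?_
          rw [Pi.basisFun_apply, Module.End.mul_apply]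
          change (Xi (Xg m l σ)).unop (Mf f) = opPerm r m σ (goodProj r m (l : ℕ) (Mf f))
          by_cases hf : goodF r m (l : ℕ) f
          · rw [(goodProj_Mf _ f).1 hf]
            exact hXix l σ _ (Submodule.subset_span ⟨f, hf, rfl⟩)
          · rw [(goodProj_Mf _ f).2 hf, map_zero]
            exact hXix0 l σ f hf
        rw [e]
        exact (commute_opPerm_of_mem hB σ).mul_right (commute_goodProj_of_mem _ hB)
    | mul x y hx hy =>
      rw [map_mul, map_mul, MulOpposite.unop_mul]
      exact hy.mul_right hx
    | add x y hx hy =>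
      rw [map_add, map_add, MulOpposite.unop_add]
      exact hx.add_right hy
  intro B hB h
  change Commute B _
  induction hB using Algebra.adjoin_induction with
  | mem X hX => exact hgen X hX h
  | algebraMap s => exact Algebra.commute_algebraMap_left s _
  | add X Y _ _ hX hY => exact hX.add_left hY
  | mul X Y _ _ hX hY => exact hX.mul_left hY
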